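/- arXiv:2105.00018 — 2 statements merged into one kernel-verified Lean document; each statement's English description precedes it below -/
import Mathlib

section
/- There exists η > 0 such that, as k → ∞, ‖T G_k − G_k‖₁ = O(e^{−ηk}), where T is the one-step tail-function operator of the chain X and G_k is the Derrida–Hilhorst tail function; moreover η can be taken to be any value in (0, min(δ/2, θ/2, ρ)). -/
open MeasureTheory ProbabilityTheory Real Filter Set
open scoped ENNReal

noncomputable def hkfun (k x : ℝ) : ℝ :=
  Real.log ((Real.exp (-k) + Real.exp x) / (1 + Real.exp (x - k)))

noncomputable def hY (y : ℝ) : ℝ := y + Real.log (1 + Real.exp (-y))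

/-- A σ-finite measure ν is invariant for the chain Y_{n+1} = z_{n+1} + hY (Y_n),
where the increments have density ζ. -/
def IsInvariantY (ζ : ℝ → ℝ) (ν : Measure ℝ) : Prop :=
  ∀ g : ℝ → ℝ≥0∞, Measurable g →
    ∫⁻ z, g z ∂ν = ∫⁻ y, ∫⁻ z, g (z + hY y) * ENNReal.ofReal (ζ z) ∂volume ∂ν

noncomputable def Fs (ν : Measure ℝ) (x : ℝ) : ℝ := (ν (Set.Iic x)).toReal

noncomputable def CkDH (νl νr : Measure ℝ) (k : ℝ) : ℝ := Fs νr k + Fs νl k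

/-- The Derrida--Hilhorst tail function. -/
noncomputable def GkDH (νl νr : Measure ℝ) (k x : ℝ) : ℝ :=
  if 0 ≤ x then Fs νr (k - x) / CkDH νl νr k else 1 - Fs νl (x + k) / CkDH νl νr k

noncomputable def Lk (k : ℝ) (G : ℝ → ℝ) : ℝ := ∫ x, G x / (1 + Real.exp (k - x))

/-- The operator T acting on tail functions of probability measures (so G(-∞) = 1). -/
noncomputable def Tprob (ζ : ℝ → ℝ) (k : ℝ) (G : ℝ → ℝ) (x : ℝ) : ℝ :=
  (∫ t in Set.Ioi (k + x), ζ t) + ∫ y, G y * deriv (hkfun k) y * ζ (x - hkfun k y)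

noncomputable def sg (t : ℝ) : ℝ := Real.exp t / (1 + Real.exp t)

lemma sg_pos (t : ℝ) : 0 < sg t := by unfold sg; positivity
lemma sg_le_one (t : ℝ) : sg t ≤ 1 := by
  unfold sg; rw [div_le_one (by positivity)]; linarith
lemma sg_le_exp (t : ℝ) : sg t ≤ Real.exp t := by
  unfold sg; apply div_le_self (by positivity); linarith [Real.exp_pos t]
lemma one_sub_sg_le (t : ℝ) : 1 - sg t ≤ Real.exp (-t) := by
  have h : 1 - sg t = 1 / (1 + Real.exp t) := by unfold sg; field_simp; ring
  rw [h, Real.exp_neg, ← one_div]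
  apply one_div_le_one_div_of_le (Real.exp_pos t); linarith
lemma sg_cont : Continuous sg := by
  unfold sg
  exact Real.continuous_exp.div (by fun_prop) (fun t => by positivity)
lemma sg_mono {s t : ℝ} (h : s ≤ t) : sg s ≤ sg t := by
  unfold sg
  have := Real.exp_le_exp.2 h
  rw [div_le_div_iff₀ (by positivity) (by positivity)]
  nlinarith [Real.exp_pos s, Real.exp_pos t]

noncomputable def gk (k y : ℝ) : ℝ := Real.log (Real.exp (-k) + Real.exp y)

lemma hkfun_eq (k y : ℝ) : hkfun k y = gk k y - Real.log (1 + Real.exp (y - k)) := by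
  unfold hkfun gk
  rw [Real.log_div (by positivity) (by positivity)]

lemma hY_eq (k y : ℝ) : hY (y + k) = gk k y + k := by
  unfold hY gk
  have : Real.exp (-k) + Real.exp y = Real.exp y * (1 + Real.exp (-(y + k))) := by
    rw [mul_add, ← Real.exp_add]; ring_nf
  rw [this, Real.log_mul (by positivity) (by positivity), Real.log_exp]; ring

lemma hY_hasDeriv (y : ℝ) : HasDerivAt hY (sg y) y := by
  unfold hY
  have h1 : HasDerivAt (fun y : ℝ => 1 + Real.exp (-y)) (- Real.exp (-y)) y := by
    have := ((hasDerivAt_id y).neg.exp).const_add 1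
    simpa using this
  have h2 := (hasDerivAt_id y).add (h1.log (by positivity))
  refine HasDerivAt.congr_deriv h2 ?_
  unfold sg
  rw [Real.exp_neg]; field_simp; ring

lemma gk_hasDeriv (k y : ℝ) : HasDerivAt (gk k) (sg (y + k)) y := by
  have h : gk k = fun y => hY (y + k) - k := by
    ext y; rw [hY_eq]; ring
  rw [h]
  have := ((hY_hasDeriv (y + k)).comp_add_const y k).sub_const k
  exact this

lemma hk_hasDeriv (k y : ℝ) : HasDerivAt (hkfun k) (sg (y + k) - sg (y - k)) y := by
  have h : hkfun k = fun y => gk k y - Real.log (1 + Real.exp (y - k)) := by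
    ext y; rw [hkfun_eq]
  rw [h]
  refine (gk_hasDeriv k y).sub ?_
  have h1 : HasDerivAt (fun y : ℝ => 1 + Real.exp (y - k)) (Real.exp (y - k)) y := by
    have := (((hasDerivAt_id y).sub_const k).exp).const_add 1
    simpa using this
  exact h1.log (by positivity)

lemma deriv_hk (k : ℝ) : deriv (hkfun k) = fun y => sg (y + k) - sg (y - k) := by
  ext y; exact (hk_hasDeriv k y).deriv

lemma hk_odd (k y : ℝ) : hkfun k (-y) = - hkfun k y := by
  unfold hkfun
  rw [← Real.log_inv]
  congr 1
  rw [inv_div]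
  rw [div_eq_div_iff (by positivity) (by positivity)]
  have e1 : Real.exp (-y - k) = Real.exp (-y) * Real.exp (-k) := by rw [← Real.exp_add]; ring_nf
  have e2 : Real.exp (y - k) = Real.exp (y) * Real.exp (-k) := by rw [← Real.exp_add]; ring_nf
  have e3 : Real.exp y * Real.exp (-y) = 1 := by rw [← Real.exp_add]; simp
  rw [e1, e2]
  linear_combination (1 - Real.exp (-k) ^ 2) * e3

lemma hk_cont (k : ℝ) : Continuous (hkfun k) :=
  continuous_iff_continuousAt.2 fun y => (hk_hasDeriv k y).continuousAt
lemma gk_cont (k : ℝ) : Continuous (gk k) :=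
  continuous_iff_continuousAt.2 fun y => (gk_hasDeriv k y).continuousAt
lemma hY_cont : Continuous hY :=
  continuous_iff_continuousAt.2 fun y => (hY_hasDeriv y).continuousAt

lemma hk_atTop (k : ℝ) : Tendsto (hkfun k) atTop (nhds k) := by
  have h : hkfun k = fun y => Real.log ((Real.exp (-k) * Real.exp (-y) + 1) / (Real.exp (-y) + Real.exp (-k))) := by
    ext y
    unfold hkfun
    congr 1
    rw [div_eq_div_iff (by positivity) (by positivity)]
    have e2 : Real.exp (y - k) = Real.exp (y) * Real.exp (-k) := by rw [← Real.exp_add]; ring_nf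
    have e3 : Real.exp y * Real.exp (-y) = 1 := by rw [← Real.exp_add]; simp
    rw [e2]
    linear_combination (1 - Real.exp (-k) ^ 2) * e3
  rw [h]
  have ht : Tendsto (fun y : ℝ => Real.exp (-y)) atTop (nhds 0) :=
    Real.tendsto_exp_neg_atTop_nhds_zero
  have h2 : Tendsto (fun y : ℝ => (Real.exp (-k) * Real.exp (-y) + 1) / (Real.exp (-y) + Real.exp (-k))) atTop
      (nhds ((Real.exp (-k) * 0 + 1) / (0 + Real.exp (-k)))) := by
    refine Tendsto.div ((ht.const_mul _).add_const 1) (ht.add_const _) ?_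
    have := Real.exp_pos (-k); simp
  have h3 := h2.log (by simp)
  convert h3 using 2
  simp

lemma hk_atBot (k : ℝ) : Tendsto (hkfun k) atBot (nhds (-k)) := by
  have h : hkfun k = fun y => - hkfun k (-y) := by
    ext y; rw [hk_odd]; ring
  rw [h]
  exact ((hk_atTop k).comp tendsto_neg_atBot_atTop).neg

lemma hY_ge (y : ℝ) : y ≤ hY y := by
  unfold hY
  have : 0 ≤ Real.log (1 + Real.exp (-y)) := Real.log_nonneg (by linarith [Real.exp_pos (-y)])
  linarith

lemma hY_pos (y : ℝ) : 0 < hY y := by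
  have h := hY_eq 0 y
  simp only [add_zero] at h
  rw [h]; unfold gk
  apply Real.log_pos
  simp; positivity

lemma gk_ge (k y : ℝ) : y ≤ gk k y := by
  have := hY_ge (y + k); rw [hY_eq] at this; linarith

lemma hk_le_gk (k y : ℝ) : hkfun k y ≤ gk k y := by
  rw [hkfun_eq]
  have : 0 ≤ Real.log (1 + Real.exp (y - k)) := Real.log_nonneg (by linarith [Real.exp_pos (y - k)])
  linarith

lemma gk_sub_hk_le (k y : ℝ) : |hkfun k y - gk k y| ≤ Real.exp (y - k) := by
  rw [hkfun_eq]
  have h0 : 0 ≤ Real.log (1 + Real.exp (y - k)) := Real.log_nonneg (by linarith [Real.exp_pos (y - k)])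
  have h1 := Real.log_le_sub_one_of_pos (show 0 < 1 + Real.exp (y - k) by positivity)
  rw [abs_le]; constructor <;> linarith [Real.exp_pos (y-k)]

lemma hk_ge (k y : ℝ) : min y k - 1 ≤ hkfun k y := by
  have key : ∀ m : ℝ, m ≤ y → m ≤ k → m - 1 ≤ hkfun k y := by
    intro m h1 h2
    unfold hkfun
    rw [Real.le_log_iff_exp_le (by positivity), le_div_iff₀ (by positivity)]
    have e0 : Real.exp (m - 1) ≤ Real.exp m / 2 := by
      rw [Real.exp_sub]
      have := Real.add_one_le_exp (1:ℝ)
      exact div_le_div_of_nonneg_left (Real.exp_pos _).le (by norm_num) (by linarith)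
    have e1 : Real.exp m ≤ Real.exp y := Real.exp_le_exp.2 h1
    have e2 : Real.exp m * Real.exp (y - k) ≤ Real.exp y := by
      rw [← Real.exp_add]; exact Real.exp_le_exp.2 (by linarith)
    nlinarith [Real.exp_pos (y-k), Real.exp_pos (-k)]
  exact key _ (min_le_left _ _) (min_le_right _ _)

lemma dk_nonneg {k : ℝ} (hk : 0 ≤ k) (y : ℝ) : 0 ≤ sg (y + k) - sg (y - k) := by
  have := sg_mono (show y - k ≤ y + k by linarith); linarith
lemma dk_le_one (k y : ℝ) : sg (y + k) - sg (y - k) ≤ 1 := by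
  linarith [sg_le_one (y+k), sg_pos (y-k)]
lemma dk_le_exp (k y : ℝ) : sg (y + k) - sg (y - k) ≤ Real.exp (k - y) := by
  have := one_sub_sg_le (y - k)
  rw [neg_sub] at this
  linarith [sg_le_one (y+k)]

lemma ftc_full (Φ φ : ℝ → ℝ) (hd : ∀ y, HasDerivAt Φ (φ y) y) (h0 : ∀ y, 0 ≤ φ y)
    (hc : Continuous φ) (a b : ℝ) (ha : Tendsto Φ atBot (nhds a)) (hb : Tendsto Φ atTop (nhds b)) :
    Integrable φ ∧ ∫ y, φ y = b - a := by
  have hI : Integrable φ := by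
    refine integrable_of_intervalIntegral_norm_tendsto (ι := ℝ) (l := atTop) (a := fun n : ℝ => -n)
      (b := fun n => n) (b - a) (fun n => hc.integrableOn_Ioc) tendsto_neg_atTop_atBot tendsto_id ?_
    have : (fun n : ℝ => ∫ x in (-n)..n, ‖φ x‖) = fun n => Φ n - Φ (-n) := by
      ext n
      simp_rw [Real.norm_of_nonneg (h0 _)]
      exact intervalIntegral.integral_eq_sub_of_hasDerivAt (fun x _ => hd x)
        (hc.intervalIntegrable _ _)
    rw [this]
    exact hb.sub (ha.comp tendsto_neg_atTop_atBot)
  exact ⟨hI, integral_of_hasDerivAt_of_tendsto hd hI ha hb⟩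

structure Dens (ζ : ℝ → ℝ) (δ θ K : ℝ) : Prop where
  cont : Continuous ζ
  nn : ∀ x, 0 ≤ ζ x
  int : Integrable ζ
  one : ∫ x, ζ x = 1
  K1 : 1 ≤ K
  tail : ∀ r : ℝ, ∫⁻ y in {y : ℝ | r < |y|}, ENNReal.ofReal (ζ y) ≤ ENNReal.ofReal (K * Real.exp (-δ * r))
  hol : ∀ x y, |ζ x - ζ y| ≤ K * |x - y| ^ θ

noncomputable def Qc (ζ : ℝ → ℝ) (t : ℝ) : ℝ := ∫ y in Iic t, ζ y

lemma Qc_hasDeriv {ζ : ℝ → ℝ} (hc : Continuous ζ) (hi : Integrable ζ) (t : ℝ) :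
    HasDerivAt (Qc ζ) (ζ t) t := by
  have h : Qc ζ = fun t => (∫ y in (0:ℝ)..t, ζ y) + Qc ζ 0 := by
    ext t
    unfold Qc
    rw [← intervalIntegral.integral_Iic_sub_Iic hi.integrableOn hi.integrableOn]; ring
  rw [h]
  exact (intervalIntegral.integral_hasDerivAt_right (hc.intervalIntegrable _ _)
    (hc.stronglyMeasurableAtFilter _ _) hc.continuousAt).add_const _

lemma Qc_atBot {ζ : ℝ → ℝ} : Tendsto (Qc ζ) atBot (nhds 0) :=
  tendsto_integral_Iic_zero tendsto_id

lemma Qc_atTop {ζ : ℝ → ℝ} (hi : Integrable ζ) : Tendsto (Qc ζ) atTop (nhds (∫ x, ζ x)) :=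
  (aecover_Iic tendsto_id).integral_tendsto_of_countably_generated hi

lemma Qc_compl {ζ : ℝ → ℝ} (hi : Integrable ζ) (t : ℝ) :
    (∫ y in Ioi t, ζ y) = (∫ x, ζ x) - Qc ζ t := by
  unfold Qc
  rw [← intervalIntegral.integral_Iic_add_Ioi (b := t) hi.integrableOn hi.integrableOn]; ring

lemma Qc_cont {ζ : ℝ → ℝ} (hc : Continuous ζ) (hi : Integrable ζ) : Continuous (Qc ζ) :=
  continuous_iff_continuousAt.2 fun y => (Qc_hasDeriv hc hi y).continuousAt

lemma hk_ftc {ζ : ℝ → ℝ} (hc : Continuous ζ) (hn : ∀ x, 0 ≤ ζ x) (hi : Integrable ζ)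
    {k : ℝ} (hk : 0 ≤ k) (x : ℝ) :
    Integrable (fun y => (sg (y + k) - sg (y - k)) * ζ (x - hkfun k y)) ∧
    ∫ y, (sg (y + k) - sg (y - k)) * ζ (x - hkfun k y) = Qc ζ (x + k) - Qc ζ (x - k) := by
  have hcs := sg_cont
  have hch := hk_cont k
  have hQ := Qc_cont hc hi
  have := ftc_full (fun y => - Qc ζ (x - hkfun k y))
    (fun y => (sg (y + k) - sg (y - k)) * ζ (x - hkfun k y)) ?_ ?_ ?_ (- Qc ζ (x + k)) (- Qc ζ (x - k)) ?_ ?_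
  · refine ⟨this.1, this.2.trans (by ring)⟩
  · intro y
    have h1 := ((Qc_hasDeriv hc hi (x - hkfun k y)).comp y ((hk_hasDeriv k y).const_sub x)).neg
    refine HasDerivAt.congr_deriv h1 ?_
    ring
  · intro y; exact mul_nonneg (dk_nonneg hk y) (hn _)
  · fun_prop
  · have := ((hQ.tendsto (x - -k)).comp ((hk_atBot k).const_sub x)).neg
    simpa using this
  · exact ((hQ.tendsto (x - k)).comp ((hk_atTop k).const_sub x)).neg

lemma hY_ftc {ζ : ℝ → ℝ} (hc : Continuous ζ) (hn : ∀ x, 0 ≤ ζ x) (hi : Integrable ζ)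
    (x y : ℝ) :
    IntegrableOn (fun u => sg u * ζ (x - hY u)) (Ioi y) ∧
    ∫ u in Ioi y, sg u * ζ (x - hY u) = Qc ζ (x - hY y) := by
  have hd : ∀ u ∈ Ici y, HasDerivAt (fun u => - Qc ζ (x - hY u)) (sg u * ζ (x - hY u)) u := by
    intro u _
    have h1 := ((Qc_hasDeriv hc hi (x - hY u)).comp u ((hY_hasDeriv u).const_sub x)).neg
    refine HasDerivAt.congr_deriv h1 ?_
    ring
  have hp : ∀ u ∈ Ioi y, 0 ≤ sg u * ζ (x - hY u) := fun u _ => mul_nonneg (sg_pos u).le (hn _)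
  have ht : Tendsto (fun u => - Qc ζ (x - hY u)) atTop (nhds (-0)) := by
    refine (Qc_atBot.comp ?_).neg
    have : Tendsto hY atTop atTop := tendsto_atTop_mono hY_ge tendsto_id
    exact tendsto_atBot_add_const_left _ x (tendsto_neg_atTop_atBot.comp this)
  refine ⟨integrableOn_Ioi_deriv_of_nonneg' hd hp ht, ?_⟩
  rw [integral_Ioi_of_hasDerivAt_of_nonneg' hd hp ht]; simp

lemma sfin {ν : Measure ℝ} (h : ∀ x : ℝ, ν (Iic x) < ⊤) : SigmaFinite ν := by
  refine ⟨⟨⟨fun n : ℕ => Iic (n : ℝ), fun _ => trivial, fun n => h n, ?_⟩⟩⟩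
  ext x; simp only [mem_iUnion, mem_Iic, mem_univ, iff_true]; exact exists_nat_ge x

lemma Fs_nonneg (ν : Measure ℝ) (x : ℝ) : 0 ≤ Fs ν x := ENNReal.toReal_nonneg
lemma Fs_mono {ν : Measure ℝ} (h : ∀ x : ℝ, ν (Iic x) < ⊤) : Monotone (Fs ν) := fun _ y hxy =>
  ENNReal.toReal_mono (h y).ne (measure_mono (Iic_subset_Iic.2 hxy))

lemma inv_F {ζ : ℝ → ℝ} (hc : Continuous ζ) (hn : ∀ x, 0 ≤ ζ x) (hi : Integrable ζ)
    {ν : Measure ℝ} (hf : ∀ x : ℝ, ν (Iic x) < ⊤) (hinv : IsInvariantY ζ ν) (x : ℝ) :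
    Integrable (fun y => Fs ν y * sg y * ζ (x - hY y)) ∧
    ∫ y, Fs ν y * sg y * ζ (x - hY y) = Fs ν x := by
  have := sfin hf
  have hcs := sg_cont
  have hch := hY_cont
  have hl : ∫⁻ y, ENNReal.ofReal (Fs ν y * sg y * ζ (x - hY y)) = ν (Iic x) := by
    have h1 := hinv ((Iic x).indicator 1) (measurable_one.indicator measurableSet_Iic)
    rw [lintegral_indicator_one measurableSet_Iic] at h1
    rw [h1]
    have h2 : ∀ y, (∫⁻ z, (Iic x).indicator (1 : ℝ → ℝ≥0∞) (z + hY y) * ENNReal.ofReal (ζ z))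
        = ∫⁻ u, (Ici y).indicator (fun u => ENNReal.ofReal (sg u * ζ (x - hY u))) u := by
      intro y
      rw [lintegral_indicator measurableSet_Ici, setLIntegral_congr Ioi_ae_eq_Ici.symm,
        ← ofReal_integral_eq_lintegral_ofReal (hY_ftc hc hn hi x y).1
          (ae_of_all _ fun u => mul_nonneg (sg_pos u).le (hn _)), (hY_ftc hc hn hi x y).2, Qc,
        ofReal_integral_eq_lintegral_ofReal hi.integrableOn (ae_of_all _ hn),
        ← lintegral_indicator measurableSet_Iic]
      refine lintegral_congr fun z => ?_
      by_cases hz : z ≤ x - hY y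
      · have hz' : z + hY y ≤ x := by linarith
        simp [indicator, hz, hz']
      · have hz' : ¬ z + hY y ≤ x := by intro h; apply hz; linarith
        simp [indicator, hz, hz']
    simp_rw [h2]
    rw [lintegral_lintegral_swap]
    · refine lintegral_congr fun u => ?_
      have : (fun y => (Ici y).indicator (fun u => ENNReal.ofReal (sg u * ζ (x - hY u))) u)
          = (Iic u).indicator (fun _ => ENNReal.ofReal (sg u * ζ (x - hY u))) := by
        ext y; simp [indicator]
      rw [this, lintegral_indicator_const measurableSet_Iic, mul_assoc,
        ENNReal.ofReal_mul (Fs_nonneg _ _), Fs, ENNReal.ofReal_toReal (hf u).ne, mul_comm]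
    · have hms : MeasurableSet {p : ℝ × ℝ | p.1 ≤ p.2} := measurableSet_le measurable_fst measurable_snd
      have : (Function.uncurry fun y u => (Ici y).indicator (fun u => ENNReal.ofReal (sg u * ζ (x - hY u))) u)
        = {p : ℝ × ℝ | p.1 ≤ p.2}.indicator (fun p => ENNReal.ofReal (sg p.2 * ζ (x - hY p.2))) := by
        ext p; simp [indicator, Function.uncurry]
      rw [this]
      refine (Measurable.indicator ?_ hms).aemeasurable
      refine ENNReal.measurable_ofReal.comp (Continuous.measurable ?_)
      fun_prop
  have hnn : ∀ y, 0 ≤ Fs ν y * sg y * ζ (x - hY y) := fun y =>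
    mul_nonneg (mul_nonneg (Fs_nonneg _ _) (sg_pos y).le) (hn _)
  have hm : Measurable (fun y => Fs ν y * sg y * ζ (x - hY y)) := by
    have h1 := (Fs_mono hf).measurable
    have h2 : Measurable fun y => ζ (x - hY y) := Continuous.measurable (by fun_prop)
    exact (h1.mul hcs.measurable).mul h2
  have hI : Integrable (fun y => Fs ν y * sg y * ζ (x - hY y)) := by
    refine ⟨hm.aestronglyMeasurable, ?_⟩
    rw [hasFiniteIntegral_iff_ofReal (ae_of_all _ hnn), hl]; exact hf x
  refine ⟨hI, ?_⟩
  rw [integral_eq_lintegral_of_nonneg_ae (ae_of_all _ hnn) hm.aestronglyMeasurable, hl]; rfl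

lemma one_sub_T {ζ : ℝ → ℝ} (hc : Continuous ζ) (hn : ∀ x, 0 ≤ ζ x) (hi : Integrable ζ)
    (h1 : ∫ x, ζ x = 1) {k : ℝ} (hk : 0 ≤ k) {G : ℝ → ℝ} (hG : Measurable G)
    (hGb : ∀ x, |G x| ≤ 1) (x : ℝ) :
    Integrable (fun y => (1 - G y) * (sg (y + k) - sg (y - k)) * ζ (x - hkfun k y)) ∧
    1 - Tprob ζ k G x = Qc ζ (x - k)
      + ∫ y, (1 - G y) * (sg (y + k) - sg (y - k)) * ζ (x - hkfun k y) := by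
  obtain ⟨a, b⟩ := hk_ftc hc hn hi hk x
  have hGI : Integrable (fun y => G y * ((sg (y + k) - sg (y - k)) * ζ (x - hkfun k y))) :=
    a.bdd_mul (c := 1) hG.aestronglyMeasurable (ae_of_all _ hGb)
  have e : (fun y => (1 - G y) * (sg (y + k) - sg (y - k)) * ζ (x - hkfun k y))
    = fun y => (sg (y + k) - sg (y - k)) * ζ (x - hkfun k y)
        - G y * ((sg (y + k) - sg (y - k)) * ζ (x - hkfun k y)) := by
    ext y; ring
  rw [e]
  refine ⟨a.sub hGI, ?_⟩
  rw [integral_sub a hGI, b, Tprob, Qc_compl hi, h1, deriv_hk, add_comm k x]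
  simp_rw [mul_assoc]
  ring

lemma T_reflect {ζ : ℝ → ℝ} (hc : Continuous ζ) (hn : ∀ x, 0 ≤ ζ x) (hi : Integrable ζ)
    (h1 : ∫ x, ζ x = 1) {k : ℝ} (hk : 0 ≤ k) {G : ℝ → ℝ} (hG : Measurable G)
    (hGb : ∀ x, |G x| ≤ 1) (x : ℝ) :
    Tprob (fun x => ζ (-x)) k (fun y => 1 - G (-y)) x = 1 - Tprob ζ k G (-x) := by
  rw [(one_sub_T hc hn hi h1 hk hG hGb (-x)).2, Tprob, deriv_hk]
  congr 1
  · rw [integral_comp_neg_Ioi, Qc]; congr 3; ring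
  · rw [← integral_neg_eq_self]
    congr 1; ext y
    rw [hk_odd, neg_neg]
    have e1 : sg (-y + k) = 1 - sg (y - k) := by
      have : -y + k = -(y - k) := by ring
      rw [this]; unfold sg; rw [Real.exp_neg]; field_simp; ring
    have e2 : sg (-y - k) = 1 - sg (y + k) := by
      have : -y - k = -(y + k) := by ring
      rw [this]; unfold sg; rw [Real.exp_neg]; field_simp; ring
    beta_reduce
    rw [e1, e2]
    ring_nf

lemma Dens.tailS {ζ : ℝ → ℝ} {δ θ K : ℝ} (D : Dens ζ δ θ K) (a : ℝ) :
    ∫⁻ x in Iio 0, ENNReal.ofReal (ζ (x - a)) ≤ ENNReal.ofReal (K * Real.exp (-δ * a)) := by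
  refine le_trans ?_ (D.tail a)
  rw [← lintegral_indicator measurableSet_Iio,
    ← lintegral_indicator (measurableSet_lt measurable_const continuous_abs.measurable),
    ← lintegral_sub_right_eq_self (fun x => indicator {y : ℝ | a < |y|} (fun y => ENNReal.ofReal (ζ y)) x) a]
  refine lintegral_mono fun x => ?_
  by_cases hx : x < 0
  · have : a < |x - a| := by
      have := neg_le_abs (x - a); linarith
    simp [indicator, hx, this]
  · simp [indicator, hx]

lemma Dens.D1 {ζ : ℝ → ℝ} {δ θ K : ℝ} (D : Dens ζ δ θ K) (a b : ℝ) :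
    ∫⁻ x in Iio 0, ENNReal.ofReal |ζ (x - a) - ζ (x - b)| ≤
      ENNReal.ofReal (K * Real.exp (-δ * a) + K * Real.exp (-δ * b)) := by
  have hK := D.K1
  have hc := D.cont
  rw [ENNReal.ofReal_add (by positivity) (by positivity)]
  refine le_trans ?_ (add_le_add (D.tailS a) (D.tailS b))
  have m1 : Measurable fun x => ENNReal.ofReal (ζ (x - a)) :=
    ENNReal.measurable_ofReal.comp (Continuous.measurable (by fun_prop))
  rw [← lintegral_add_left m1]
  refine lintegral_mono fun x => ?_
  have h1 := D.nn (x - a)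
  have h2 := D.nn (x - b)
  rw [← ENNReal.ofReal_add h1 h2]
  apply ENNReal.ofReal_le_ofReal
  rw [abs_le]; constructor <;> linarith

lemma Dens.D2 {ζ : ℝ → ℝ} {δ θ K : ℝ} (D : Dens ζ δ θ K) (hδ : 0 < δ) (hθ : 0 < θ) (a b s : ℝ) (hs : 0 ≤ s)
    (hab : |a - b| ≤ Real.exp (-s)) :
    ∫⁻ x in Iio 0, ENNReal.ofReal |ζ (x - a) - ζ (x - b)| ≤
      ENNReal.ofReal (2 * K * (2 + θ / δ * s) * Real.exp (-θ * s)) := by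
  have hK := D.K1
  have hc := D.cont
  set R : ℝ := 1 + θ / δ * s with hR
  have hR1 : 1 ≤ R := by rw [hR]; have : 0 ≤ θ / δ * s := by positivity
                         linarith
  set d := a - b with hd
  have hd1 : |d| ≤ 1 := hab.trans (by rw [← Real.exp_zero]; exact Real.exp_le_exp.2 (by linarith))
  have hmS : MeasurableSet {x : ℝ | R < |x|} := measurableSet_lt measurable_const continuous_abs.measurable
  have hmS1 : MeasurableSet {x : ℝ | R - 1 < |x|} := measurableSet_lt measurable_const continuous_abs.measurable
  calc ∫⁻ x in Iio 0, ENNReal.ofReal |ζ (x - a) - ζ (x - b)|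
      ≤ ∫⁻ x, ENNReal.ofReal |ζ (x - a) - ζ (x - b)| := setLIntegral_le_lintegral _ _
    _ = ∫⁻ x, ENNReal.ofReal |ζ x - ζ (x + d)| := by
        rw [← lintegral_sub_right_eq_self (fun x => ENNReal.ofReal |ζ x - ζ (x + d)|) a]
        refine lintegral_congr fun x => ?_
        rw [hd]; congr 5; ring
    _ = (∫⁻ x in {x | R < |x|}ᶜ, ENNReal.ofReal |ζ x - ζ (x + d)|)
        + ∫⁻ x in {x | R < |x|}, ENNReal.ofReal |ζ x - ζ (x + d)| := by
        rw [add_comm, lintegral_add_compl _ hmS]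
    _ ≤ ENNReal.ofReal (K * Real.exp (-θ * s)) * ENNReal.ofReal (2 * R)
        + (ENNReal.ofReal (K * Real.exp (-δ * R)) + ENNReal.ofReal (K * Real.exp (-δ * (R - 1)))) := by
        gcongr
        · have hset : {x : ℝ | R < |x|}ᶜ = Icc (-R) R := by
            ext x; simp [abs_le]
          have hv : ENNReal.ofReal (2 * R) = volume ({x : ℝ | R < |x|}ᶜ) := by
            rw [hset, Real.volume_Icc]; congr 1; ring
          rw [hv, ← setLIntegral_const]
          refine lintegral_mono fun x => ENNReal.ofReal_le_ofReal ?_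
          refine (D.hol _ _).trans ?_
          have : |x - (x + d)| = |d| := by rw [← abs_neg d]; congr 1; ring
          rw [this]
          refine mul_le_mul_of_nonneg_left ?_ (by linarith)
          calc |d| ^ θ ≤ (Real.exp (-s)) ^ θ := Real.rpow_le_rpow (abs_nonneg _) hab hθ.le
            _ = Real.exp (-θ * s) := by rw [← Real.exp_mul]; congr 1; ring
        · calc ∫⁻ x in {x | R < |x|}, ENNReal.ofReal |ζ x - ζ (x + d)|
              ≤ ∫⁻ x in {x | R < |x|}, (ENNReal.ofReal (ζ x) + ENNReal.ofReal (ζ (x + d))) := by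
                refine lintegral_mono fun x => ?_
                have h1 := D.nn x
                have h2 := D.nn (x + d)
                rw [← ENNReal.ofReal_add h1 h2]
                apply ENNReal.ofReal_le_ofReal
                rw [abs_le]; constructor <;> linarith
            _ = (∫⁻ x in {x | R < |x|}, ENNReal.ofReal (ζ x)) + ∫⁻ x in {x | R < |x|}, ENNReal.ofReal (ζ (x + d)) :=
                lintegral_add_left (ENNReal.measurable_ofReal.comp hc.measurable) _
            _ ≤ _ := by
                refine add_le_add (D.tail R) (le_trans ?_ (D.tail (R - 1)))
                rw [← lintegral_indicator hmS, ← lintegral_indicator hmS1,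
                  ← lintegral_add_right_eq_self (fun x => indicator {y : ℝ | R - 1 < |y|} (fun y => ENNReal.ofReal (ζ y)) x) d]
                refine lintegral_mono fun x => ?_
                by_cases hx : R < |x|
                · have : R - 1 < |x + d| := by
                    have h3 : |x| ≤ |x + d| + |d| := by
                      have := abs_sub (x + d) d; simpa using this
                    linarith
                  simp [indicator, hx, this]
                · simp [indicator, hx]
    _ ≤ _ := by
        rw [← ENNReal.ofReal_mul (by positivity), ← ENNReal.ofReal_add (by positivity) (by positivity),
          ← ENNReal.ofReal_add (by positivity) (by positivity)]
        apply ENNReal.ofReal_le_ofReal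
        have e1 : Real.exp (-δ * (R - 1)) = Real.exp (-θ * s) := by
          congr 1; rw [hR]; field_simp; ring
        have e2 : Real.exp (-δ * R) ≤ Real.exp (-θ * s) := by
          rw [← e1]; apply Real.exp_le_exp.2; linarith
        have e3 : 2 + θ / δ * s = R + 1 := by rw [hR]; ring
        rw [e1, e3]
        nlinarith [Real.exp_pos (-θ * s)]

lemma one_add_le {ε y : ℝ} (hε : 0 < ε) (hε1 : ε ≤ 1) : 1 + y ≤ ε⁻¹ * Real.exp (ε * y) := by
  rw [inv_mul_eq_div, le_div_iff₀ hε]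
  nlinarith [Real.add_one_le_exp (ε * y)]

lemma Dens.D2' {ζ : ℝ → ℝ} {δ θ K : ℝ} (D : Dens ζ δ θ K) (hδ : 0 < δ) (hθ : 0 < θ)
    {ε : ℝ} (hε : 0 < ε) (hε1 : ε ≤ 1) (a b s : ℝ) (hs : 0 ≤ s)
    (hab : |a - b| ≤ Real.exp (-s)) :
    ∫⁻ x in Iio 0, ENNReal.ofReal |ζ (x - a) - ζ (x - b)| ≤
      ENNReal.ofReal (2 * K * (2 + θ / δ) * ε⁻¹ * Real.exp (-(θ - ε) * s)) := by
  refine (D.D2 hδ hθ a b s hs hab).trans (ENNReal.ofReal_le_ofReal ?_)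
  have hK := D.K1
  have h1 : Real.exp (-(θ - ε) * s) = Real.exp (ε * s) * Real.exp (-θ * s) := by
    rw [← Real.exp_add]; congr 1; ring
  rw [h1]
  have h2 : 2 + θ / δ * s ≤ (2 + θ / δ) * (ε⁻¹ * Real.exp (ε * s)) := by
    have := one_add_le (y := s) hε hε1
    have h3 : 0 < θ / δ := by positivity
    nlinarith
  calc 2 * K * (2 + θ / δ * s) * Real.exp (-θ * s)
      ≤ 2 * K * ((2 + θ / δ) * (ε⁻¹ * Real.exp (ε * s))) * Real.exp (-θ * s) := by gcongr
    _ = _ := by ring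

lemma Dens.tail1 {ζ : ℝ → ℝ} {δ θ K : ℝ} (D : Dens ζ δ θ K) (a : ℝ) :
    ∫⁻ x in Iio 0, ENNReal.ofReal (ζ (x - a)) ≤ ENNReal.ofReal K := by
  refine (setLIntegral_le_lintegral _ _).trans ?_
  rw [lintegral_sub_right_eq_self (fun x => ENNReal.ofReal (ζ x)) a,
    ← ofReal_integral_eq_lintegral_ofReal D.int (ae_of_all _ D.nn), D.one]
  exact ENNReal.ofReal_le_ofReal D.K1

lemma Dens.inner {ζ : ℝ → ℝ} {δ θ K : ℝ} (D : Dens ζ δ θ K) (a b h f p q Pa Pb Dr : ℝ) (hf : 0 ≤ f) (hp : 0 ≤ p)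
    (hPa0 : 0 ≤ Pa) (hPb0 : 0 ≤ Pb) (hDr0 : 0 ≤ Dr)
    (hPa : ∫⁻ x in Iio 0, ENNReal.ofReal (ζ (x - a)) ≤ ENNReal.ofReal Pa)
    (hPb : ∫⁻ x in Iio 0, ENNReal.ofReal (ζ (x - b)) ≤ ENNReal.ofReal Pb)
    (hDr : ∫⁻ x in Iio 0, ENNReal.ofReal |ζ (x - a) - ζ (x - b)| ≤ ENNReal.ofReal Dr) :
    ∫⁻ x in Iio 0, ENNReal.ofReal |h * p * ζ (x - a) - f * q * ζ (x - b)| ≤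
      ENNReal.ofReal (|h - f| * p * Pa + f * |p - q| * Pb
        + f * p * Dr) := by
  have hK := D.K1
  have hc := D.cont
  have m1 : Measurable fun x => ENNReal.ofReal (ζ (x - a)) :=
    ENNReal.measurable_ofReal.comp (Continuous.measurable (by fun_prop))
  have m2 : Measurable fun x => ENNReal.ofReal (ζ (x - b)) :=
    ENNReal.measurable_ofReal.comp (Continuous.measurable (by fun_prop))
  have m3 : Measurable fun x => ENNReal.ofReal |ζ (x - a) - ζ (x - b)| :=
    ENNReal.measurable_ofReal.comp (Continuous.measurable (by fun_prop))
  have hc1 : 0 ≤ |h - f| * p := by positivity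
  have hc2 : 0 ≤ f * |p - q| := by positivity
  have hc3 : 0 ≤ f * p := by positivity
  rw [ENNReal.ofReal_add (by positivity) (by positivity), ENNReal.ofReal_add (by positivity) (by positivity),
    ENNReal.ofReal_mul hc1, ENNReal.ofReal_mul hc2, ENNReal.ofReal_mul hc3]
  calc ∫⁻ x in Iio 0, ENNReal.ofReal |h * p * ζ (x - a) - f * q * ζ (x - b)|
      ≤ ∫⁻ x in Iio 0, (ENNReal.ofReal (|h - f| * p) * ENNReal.ofReal (ζ (x - a))
          + ENNReal.ofReal (f * |p - q|) * ENNReal.ofReal (ζ (x - b))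
          + ENNReal.ofReal (f * p) * ENNReal.ofReal |ζ (x - a) - ζ (x - b)|) := by
        refine lintegral_mono fun x => ?_
        have n1 := D.nn (x - a)
        have n2 := D.nn (x - b)
        rw [← ENNReal.ofReal_mul hc1, ← ENNReal.ofReal_mul hc2, ← ENNReal.ofReal_mul hc3,
          ← ENNReal.ofReal_add (by positivity) (by positivity), ← ENNReal.ofReal_add (by positivity) (by positivity)]
        apply ENNReal.ofReal_le_ofReal
        have e : h * p * ζ (x - a) - f * q * ζ (x - b)
          = (h - f) * p * ζ (x - a) + f * (p - q) * ζ (x - b) + f * p * (ζ (x - a) - ζ (x - b)) := by ring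
        rw [e]
        refine (abs_add_three _ _ _).trans (le_of_eq ?_)
        simp only [abs_mul, abs_of_nonneg hf, abs_of_nonneg hp, abs_of_nonneg n1, abs_of_nonneg n2]
    _ ≤ _ := by
        rw [lintegral_add_right _ (m3.const_mul _), lintegral_add_right _ (m2.const_mul _),
          lintegral_const_mul _ m1, lintegral_const_mul _ m2, lintegral_const_mul _ m3]
        gcongr

structure FH (F : ℝ → ℝ) (c ρ E : ℝ) : Prop where
  mono : Monotone F
  nn : ∀ x, 0 ≤ F x
  E1 : 1 ≤ E
  asym : ∀ x, 0 ≤ x → |F x - (x + c)| ≤ E * Real.exp (-ρ * x)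
  lin : ∀ x, 0 ≤ x → F x ≤ E * (1 + x)

lemma mul3_le {a b c A B C : ℝ} (ha : a ≤ A) (hb : b ≤ B) (hc : c ≤ C)
    (a0 : 0 ≤ a) (b0 : 0 ≤ b) (c0 : 0 ≤ c) : a * b * c ≤ A * B * C := by
  have hA := a0.trans ha
  have hB := b0.trans hb
  gcongr

noncomputable def Hk (F Fo : ℝ → ℝ) (k y : ℝ) : ℝ :=
  if 0 ≤ y then Fo k + F k - Fo (k - y) else F (y + k)

lemma Hk_bd1 {F Fo : ℝ → ℝ} {c co ρ E : ℝ} (hF : FH F c ρ E) (hFo : FH Fo co ρ E) (hρ : 0 < ρ)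
    {k y : ℝ} (hy : 0 ≤ y) (hyk : y ≤ k) :
    |Hk F Fo k y - F (y + k)| ≤ 4 * E * Real.exp (-ρ * (k - y)) := by
  rw [Hk, if_pos hy]
  have h1 := hF.asym k (by linarith)
  have h2 := hFo.asym k (by linarith)
  have h3 := hFo.asym (k - y) (by linarith)
  have h4 := hF.asym (y + k) (by linarith)
  have hE := hF.E1
  have e1 : Real.exp (-ρ * k) ≤ Real.exp (-ρ * (k - y)) := Real.exp_le_exp.2 (by nlinarith)
  have e2 : Real.exp (-ρ * (y + k)) ≤ Real.exp (-ρ * (k - y)) := Real.exp_le_exp.2 (by nlinarith)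
  have e1' := mul_le_mul_of_nonneg_left e1 (show 0 ≤ E by linarith)
  have e2' := mul_le_mul_of_nonneg_left e2 (show 0 ≤ E by linarith)
  rw [abs_le] at *
  constructor <;> linarith [h1.1, h1.2, h2.1, h2.2, h3.1, h3.2, h4.1, h4.2]

lemma Hk_bd2 {F Fo : ℝ → ℝ} {c co ρ E : ℝ} (hF : FH F c ρ E) (hFo : FH Fo co ρ E)
    {k y : ℝ} (hk : 0 ≤ k) (hy : 0 ≤ y) :
    |Hk F Fo k y - F (y + k)| ≤ 4 * E * ((1 + k) * (1 + y)) := by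
  rw [Hk, if_pos hy]
  have h1 := hF.lin k (by linarith)
  have h2 := hFo.lin k (by linarith)
  have h3 := hFo.mono (show k - y ≤ k by linarith)
  have h4 := hF.lin (y + k) (by linarith)
  have h5 := hF.nn (y + k)
  have h6 := hF.nn k
  have h7 := hFo.nn (k - y)
  have hE := hF.E1
  have i1 : E * (1 + k) ≤ E * ((1 + k) * (1 + y)) := by
    apply mul_le_mul_of_nonneg_left _ (by linarith); nlinarith
  have i2 : E * (1 + (y + k)) ≤ E * ((1 + k) * (1 + y)) := by
    apply mul_le_mul_of_nonneg_left _ (by linarith); nlinarith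
  have : 0 ≤ E * (1 + k) := by positivity
  rw [abs_le]
  constructor <;> linarith

set_option maxHeartbeats 4000000 in
lemma point {ζ : ℝ → ℝ} {δ θ K : ℝ} (D : Dens ζ δ θ K) (hδ : 0 < δ) (hθ : 0 < θ)
    {F Fo : ℝ → ℝ} {c co ρ E : ℝ} (hF : FH F c ρ E) (hFo : FH Fo co ρ E) (hρ : 0 < ρ)
    {ε η : ℝ} (hε : 0 < ε) (hε1 : ε ≤ 1 / 4) (hη : 0 < η) (c1 : η + 2 * ε ≤ δ / 2) (c2 : η + ε ≤ ρ)
    (c3 : η + ε ≤ θ / 2) (c4 : η ≤ 1 / 2) {k : ℝ} (hk : 0 ≤ k) (y : ℝ) :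
    ∫⁻ x in Iio 0, ENNReal.ofReal |Hk F Fo k y * (sg (y + k) - sg (y - k)) * ζ (x - hkfun k y)
        - F (y + k) * sg (y + k) * ζ (x - gk k y)| ≤
      ENNReal.ofReal (12 * E * (2 * K * Real.exp δ + 2 * K * (2 + θ / δ) * ε⁻¹) * ε⁻¹ * (1 + k) *
        (Real.exp (-η * k) * Real.exp (-ε * |y|))) := by
  have hK := D.K1
  have hE := hF.E1
  set K2 : ℝ := 2 * K * Real.exp δ + 2 * K * (2 + θ / δ) * ε⁻¹ with hK2
  have heδ : 1 ≤ Real.exp δ := Real.one_le_exp hδ.le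
  have hKa : 0 ≤ 2 * K * (2 + θ / δ) * ε⁻¹ := by positivity
  have hK2a : 2 * K * Real.exp δ ≤ K2 := by linarith
  have hK2b : 2 * K * (2 + θ / δ) * ε⁻¹ ≤ K2 := by
    have : 0 ≤ 2 * K * Real.exp δ := by positivity
    linarith
  have hK2c : K ≤ K2 := by nlinarith only [hK2a, heδ, hK]
  have hK2d : K * Real.exp δ ≤ K2 := by
    have : 0 ≤ K * Real.exp δ := by positivity
    linarith
  have hK2p : 0 ≤ K2 := by linarith
  have hεi : 1 ≤ ε⁻¹ := (one_le_inv₀ hε).2 (by linarith)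
  have hp0 := dk_nonneg hk y
  have hp1 := dk_le_one k y
  have hp2 := dk_le_exp k y
  have hf0 := hF.nn (y + k)
  have hs0 := (sg_pos (y - k)).le
  have hs1 := sg_le_one (y - k)
  have hs2 := sg_le_exp (y - k)
  have hpq : |sg (y + k) - sg (y - k) - sg (y + k)| = sg (y - k) := by
    rw [show sg (y + k) - sg (y - k) - sg (y + k) = - sg (y - k) by ring, abs_neg, abs_of_nonneg hs0]
  have hg := gk_ge k y
  have hh := hk_ge k y
  have hab := gk_sub_hk_le k y
  set W := Real.exp (-η * k) * Real.exp (-ε * |y|) with hW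
  have hW' : W = Real.exp (-η * k + -ε * |y|) := by rw [hW, ← Real.exp_add]
  have hW0 : 0 < W := by positivity
  set p := sg (y + k) - sg (y - k) with hp
  -- combine
  have comb : ∀ t1 t2 t3 : ℝ, t1 ≤ 4 * E * K2 * ε⁻¹ * (1 + k) * W → t2 ≤ 4 * E * K2 * ε⁻¹ * (1 + k) * W →
      t3 ≤ 4 * E * K2 * ε⁻¹ * (1 + k) * W →
      ENNReal.ofReal (t1 + t2 + t3) ≤ ENNReal.ofReal (12 * E * K2 * ε⁻¹ * (1 + k) * W) := by
    intro t1 t2 t3 h1 h2 h3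
    apply ENNReal.ofReal_le_ofReal; linarith
  -- constants absorb
  have absorb : ∀ u v w z : ℝ, 0 ≤ z → u ≤ 4 * E → v ≤ K2 → w ≤ ε⁻¹ * (1 + k) → z ≤ W → 0 ≤ u → 0 ≤ v → 0 ≤ w →
      u * v * w * z ≤ 4 * E * K2 * ε⁻¹ * (1 + k) * W := by
    intro u v w z hz hu hv hw hzW u0 v0 w0
    have := mul3_le hu hv hw u0 v0 w0
    have h2 : 0 ≤ u * v * w := by positivity
    calc u * v * w * z ≤ (4 * E * K2 * (ε⁻¹ * (1 + k))) * W := by gcongr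
      _ = _ := by ring
  have hk1 : 1 ≤ ε⁻¹ * (1 + k) := by nlinarith only [hεi, hk]
  have hk2 : (1 + k) ≤ ε⁻¹ * (1 + k) := by nlinarith only [hεi, hk]
  rcases lt_or_ge y 0 with hy | hy
  · -- y < 0
    have hyabs : |y| = -y := abs_of_neg hy
    have hH : Hk F Fo k y = F (y + k) := by rw [Hk, if_neg (not_le.2 hy)]
    have hFb : F (y + k) ≤ E * (1 + k) := (hF.mono (by linarith)).trans (hF.lin k hk)
    have hD := D.D2' hδ hθ hε (by linarith) (hkfun k y) (gk k y) (k - y) (by linarith)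
      (by rw [neg_sub]; exact hab)
    refine (D.inner _ _ (Hk F Fo k y) (F (y + k)) p (sg (y + k)) K K _ hf0 hp0 (by linarith) (by linarith)
      (by positivity) (D.tail1 _) (D.tail1 _) hD).trans ?_
    rw [hpq]
    apply comb
    · rw [hH]; simp; positivity
    · calc F (y + k) * sg (y - k) * K ≤ E * (1 + k) * Real.exp (y - k) * K :=
            mul3_le hFb hs2 le_rfl hf0 hs0 (by linarith)
        _ = E * K * (1 + k) * Real.exp (y - k) := by ring
        _ ≤ _ := by
          refine absorb _ _ _ _ (Real.exp_pos _).le (by linarith only [hE]) hK2c hk2 ?_ (by positivity) (by positivity) (by positivity)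
          rw [hW', hyabs]; apply Real.exp_le_exp.2
          linarith only [mul_nonneg (show 0 ≤ 1 - η by linarith) hk, mul_nonneg (show 0 ≤ 1 - ε by linarith) (show 0 ≤ -y by linarith)]
    · calc F (y + k) * p * (2 * K * (2 + θ / δ) * ε⁻¹ * Real.exp (-(θ - ε) * (k - y)))
          ≤ E * (1 + k) * 1 * (2 * K * (2 + θ / δ) * ε⁻¹ * Real.exp (-(θ - ε) * (k - y))) :=
            mul3_le hFb hp1 le_rfl hf0 hp0 (by positivity)
        _ = E * (2 * K * (2 + θ / δ) * ε⁻¹) * (1 + k) * Real.exp (-(θ - ε) * (k - y)) := by ring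
        _ ≤ _ := by
          refine absorb _ _ _ _ (Real.exp_pos _).le (by linarith only [hE]) hK2b hk2 ?_ (by positivity) (by positivity) (by positivity)
          rw [hW', hyabs]; apply Real.exp_le_exp.2
          linarith only [mul_nonneg (show 0 ≤ θ - ε - η by linarith) hk,
            mul_nonneg (show 0 ≤ θ - ε - ε by linarith) (show 0 ≤ -y by linarith)]
  have hyabs : |y| = y := abs_of_nonneg hy
  have hFb : F (y + k) ≤ E * ((1 + k) * (1 + y)) :=
    (hF.lin (y + k) (by linarith)).trans (mul_le_mul_of_nonneg_left (by nlinarith only [hy, hk]) (by linarith))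
  have hy1 : 1 + y ≤ ε⁻¹ * Real.exp (ε * y) := one_add_le hε (by linarith)
  have hFb' : F (y + k) ≤ E * (ε⁻¹ * (1 + k)) * Real.exp (ε * y) := by
    refine hFb.trans ?_
    calc E * ((1 + k) * (1 + y)) ≤ E * ((1 + k) * (ε⁻¹ * Real.exp (ε * y))) := by gcongr
      _ = _ := by ring
  have hPb : ∫⁻ x in Iio 0, ENNReal.ofReal (ζ (x - gk k y)) ≤ ENNReal.ofReal (K * Real.exp (-δ * y)) := by
    refine (D.tailS _).trans (ENNReal.ofReal_le_ofReal ?_)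
    refine mul_le_mul_of_nonneg_left (Real.exp_le_exp.2 ?_) (by linarith)
    nlinarith only [hg, hδ]
  rcases le_or_gt y k with hyk | hyk
  · -- 0 ≤ y ≤ k
    rw [min_eq_left hyk] at hh
    have hea : Real.exp (-δ * hkfun k y) ≤ Real.exp δ * Real.exp (-δ * y) := by
      rw [← Real.exp_add]; apply Real.exp_le_exp.2; nlinarith only [hh, hδ]
    have hPa : ∫⁻ x in Iio 0, ENNReal.ofReal (ζ (x - hkfun k y)) ≤ ENNReal.ofReal (K * Real.exp δ * Real.exp (-δ * y)) := by
      refine (D.tailS _).trans (ENNReal.ofReal_le_ofReal ?_)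
      rw [mul_assoc]
      exact mul_le_mul_of_nonneg_left hea (by linarith)
    have hDa : ∫⁻ x in Iio 0, ENNReal.ofReal |ζ (x - hkfun k y) - ζ (x - gk k y)| ≤
        ENNReal.ofReal (K2 * Real.exp (-δ * y)) := by
      refine (D.D1 _ _).trans (ENNReal.ofReal_le_ofReal ?_)
      have e2 : Real.exp (-δ * gk k y) ≤ Real.exp δ * Real.exp (-δ * y) := by
        rw [← Real.exp_add]; apply Real.exp_le_exp.2; nlinarith only [hg, hδ, hyk]
      calc K * Real.exp (-δ * hkfun k y) + K * Real.exp (-δ * gk k y)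
          ≤ K * (Real.exp δ * Real.exp (-δ * y)) + K * (Real.exp δ * Real.exp (-δ * y)) := by gcongr
        _ = 2 * K * Real.exp δ * Real.exp (-δ * y) := by ring
        _ ≤ _ := by gcongr
    have hDb : ∫⁻ x in Iio 0, ENNReal.ofReal |ζ (x - hkfun k y) - ζ (x - gk k y)| ≤
        ENNReal.ofReal (K2 * Real.exp (-(θ - ε) * (k - y))) := by
      refine (D.D2' hδ hθ hε (by linarith) (hkfun k y) (gk k y) (k - y) (by linarith)
        (by rw [neg_sub]; exact hab)).trans (ENNReal.ofReal_le_ofReal ?_)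
      gcongr
    have hD : ∫⁻ x in Iio 0, ENNReal.ofReal |ζ (x - hkfun k y) - ζ (x - gk k y)| ≤
        ENNReal.ofReal (K2 * Real.exp ((-δ * y + -(θ - ε) * (k - y)) / 2)) := by
      rcases le_total (-δ * y) (-(θ - ε) * (k - y)) with h | h
      · refine hDa.trans (ENNReal.ofReal_le_ofReal (mul_le_mul_of_nonneg_left (Real.exp_le_exp.2 ?_) hK2p))
        linarith
      · refine hDb.trans (ENNReal.ofReal_le_ofReal (mul_le_mul_of_nonneg_left (Real.exp_le_exp.2 ?_) hK2p))
        linarith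
    refine (D.inner _ _ (Hk F Fo k y) (F (y + k)) p (sg (y + k)) _ _ _ hf0 hp0 (by positivity) (by positivity)
      (by positivity) hPa hPb hD).trans ?_
    rw [hpq]
    apply comb
    · calc |Hk F Fo k y - F (y + k)| * p * (K * Real.exp δ * Real.exp (-δ * y))
          ≤ (4 * E * Real.exp (-ρ * (k - y))) * 1 * (K * Real.exp δ * Real.exp (-δ * y)) :=
            mul3_le (Hk_bd1 hF hFo hρ hy hyk) hp1 le_rfl (abs_nonneg _) hp0 (by positivity)
        _ = (4 * E) * (K * Real.exp δ) * 1 * Real.exp (-ρ * (k - y) + -δ * y) := by rw [Real.exp_add]; ring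
        _ ≤ _ := by
          refine absorb _ _ _ _ (Real.exp_pos _).le le_rfl hK2d hk1 ?_ (by positivity) (by positivity) (by positivity)
          rw [hW', hyabs]; apply Real.exp_le_exp.2
          linarith only [mul_nonneg (show 0 ≤ ρ - η by linarith) (show 0 ≤ k - y by linarith),
            mul_nonneg (show 0 ≤ δ - η - ε by linarith) hy]
    · calc F (y + k) * sg (y - k) * (K * Real.exp (-δ * y))
          ≤ (E * (ε⁻¹ * (1 + k)) * Real.exp (ε * y)) * Real.exp (y - k) * (K * Real.exp (-δ * y)) :=
            mul3_le hFb' hs2 le_rfl hf0 hs0 (by positivity)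
        _ = E * K * (ε⁻¹ * (1 + k)) * Real.exp (ε * y + (y - k) + -δ * y) := by
            rw [Real.exp_add, Real.exp_add]; ring
        _ ≤ _ := by
          refine absorb _ _ _ _ (Real.exp_pos _).le (by linarith only [hE]) hK2c le_rfl ?_ (by positivity) (by positivity) (by positivity)
          rw [hW', hyabs]; apply Real.exp_le_exp.2
          linarith only [mul_nonneg (show 0 ≤ 1 - η by linarith) (show 0 ≤ k - y by linarith),
            mul_nonneg (show 0 ≤ δ - η - 2 * ε by linarith) hy]
    · calc F (y + k) * p * (K2 * Real.exp ((-δ * y + -(θ - ε) * (k - y)) / 2))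
          ≤ (E * (ε⁻¹ * (1 + k)) * Real.exp (ε * y)) * 1 * (K2 * Real.exp ((-δ * y + -(θ - ε) * (k - y)) / 2)) :=
            mul3_le hFb' hp1 le_rfl hf0 hp0 (by positivity)
        _ = E * K2 * (ε⁻¹ * (1 + k)) * Real.exp (ε * y + ((-δ * y + -(θ - ε) * (k - y)) / 2)) := by
            rw [Real.exp_add]; ring
        _ ≤ _ := by
          refine absorb _ _ _ _ (Real.exp_pos _).le (by linarith only [hE]) le_rfl le_rfl ?_ (by positivity) (by positivity) (by positivity)
          rw [hW', hyabs]; apply Real.exp_le_exp.2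
          linarith only [mul_nonneg (show 0 ≤ (θ - ε) / 2 - η by linarith) (show 0 ≤ k - y by linarith),
            mul_nonneg (show 0 ≤ δ / 2 - η - 2 * ε by linarith) hy]
  · -- y > k
    rw [min_eq_right hyk.le] at hh
    have hea : Real.exp (-δ * hkfun k y) ≤ Real.exp δ * Real.exp (-δ * k) := by
      rw [← Real.exp_add]; apply Real.exp_le_exp.2; nlinarith only [hh, hδ]
    have hPa : ∫⁻ x in Iio 0, ENNReal.ofReal (ζ (x - hkfun k y)) ≤ ENNReal.ofReal (K * Real.exp δ * Real.exp (-δ * k)) := by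
      refine (D.tailS _).trans (ENNReal.ofReal_le_ofReal ?_)
      rw [mul_assoc]
      exact mul_le_mul_of_nonneg_left hea (by linarith)
    have hD : ∫⁻ x in Iio 0, ENNReal.ofReal |ζ (x - hkfun k y) - ζ (x - gk k y)| ≤
        ENNReal.ofReal (K2 * Real.exp (-δ * k)) := by
      refine (D.D1 _ _).trans (ENNReal.ofReal_le_ofReal ?_)
      have e2 : Real.exp (-δ * gk k y) ≤ Real.exp δ * Real.exp (-δ * k) := by
        rw [← Real.exp_add]; apply Real.exp_le_exp.2; nlinarith only [hg, hδ, hyk]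
      calc K * Real.exp (-δ * hkfun k y) + K * Real.exp (-δ * gk k y)
          ≤ K * (Real.exp δ * Real.exp (-δ * k)) + K * (Real.exp δ * Real.exp (-δ * k)) := by gcongr
        _ = 2 * K * Real.exp δ * Real.exp (-δ * k) := by ring
        _ ≤ _ := by gcongr
    refine (D.inner _ _ (Hk F Fo k y) (F (y + k)) p (sg (y + k)) _ _ _ hf0 hp0 (by positivity) (by positivity)
      (by positivity) hPa hPb hD).trans ?_
    rw [hpq]
    have expo : ε * y + (k - y) + -δ * k ≤ -η * k + -ε * y := by
      linarith only [mul_nonneg (show 0 ≤ 1 - 2 * ε by linarith) (show 0 ≤ y - k by linarith),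
            mul_nonneg (show 0 ≤ δ - η - 2 * ε by linarith) hk]
    apply comb
    · have hb : |Hk F Fo k y - F (y + k)| ≤ 4 * E * (ε⁻¹ * (1 + k)) * Real.exp (ε * y) := by
        refine (Hk_bd2 hF hFo hk hy).trans ?_
        calc 4 * E * ((1 + k) * (1 + y)) ≤ 4 * E * ((1 + k) * (ε⁻¹ * Real.exp (ε * y))) := by gcongr
          _ = _ := by ring
      calc |Hk F Fo k y - F (y + k)| * p * (K * Real.exp δ * Real.exp (-δ * k))
          ≤ (4 * E * (ε⁻¹ * (1 + k)) * Real.exp (ε * y)) * Real.exp (k - y) * (K * Real.exp δ * Real.exp (-δ * k)) :=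
            mul3_le hb hp2 le_rfl (abs_nonneg _) hp0 (by positivity)
        _ = (4 * E) * (K * Real.exp δ) * (ε⁻¹ * (1 + k)) * Real.exp (ε * y + (k - y) + -δ * k) := by
            rw [Real.exp_add, Real.exp_add]; ring
        _ ≤ _ := by
          refine absorb _ _ _ _ (Real.exp_pos _).le le_rfl hK2d le_rfl ?_ (by positivity) (by positivity) (by positivity)
          rw [hW', hyabs]; exact Real.exp_le_exp.2 expo
    · calc F (y + k) * sg (y - k) * (K * Real.exp (-δ * y))
          ≤ (E * (ε⁻¹ * (1 + k)) * Real.exp (ε * y)) * 1 * (K * Real.exp (-δ * y)) :=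
            mul3_le hFb' hs1 le_rfl hf0 hs0 (by positivity)
        _ = E * K * (ε⁻¹ * (1 + k)) * Real.exp (ε * y + -δ * y) := by
            rw [Real.exp_add]; ring
        _ ≤ _ := by
          refine absorb _ _ _ _ (Real.exp_pos _).le (by linarith only [hE]) hK2c le_rfl ?_ (by positivity) (by positivity) (by positivity)
          rw [hW', hyabs]; apply Real.exp_le_exp.2
          linarith only [mul_nonneg hη.le (show 0 ≤ y - k by linarith),
            mul_nonneg (show 0 ≤ δ - η - 2 * ε by linarith) hy]
    · calc F (y + k) * p * (K2 * Real.exp (-δ * k))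
          ≤ (E * (ε⁻¹ * (1 + k)) * Real.exp (ε * y)) * Real.exp (k - y) * (K2 * Real.exp (-δ * k)) :=
            mul3_le hFb' hp2 le_rfl hf0 hp0 (by positivity)
        _ = E * K2 * (ε⁻¹ * (1 + k)) * Real.exp (ε * y + (k - y) + -δ * k) := by
            rw [Real.exp_add, Real.exp_add]; ring
        _ ≤ _ := by
          refine absorb _ _ _ _ (Real.exp_pos _).le (by linarith only [hE]) le_rfl le_rfl ?_ (by positivity) (by positivity) (by positivity)
          rw [hW', hyabs]; exact Real.exp_le_exp.2 expo

lemma int_exp_abs {ε : ℝ} (hε : 0 < ε) : Integrable (fun y : ℝ => Real.exp (-ε * |y|)) := by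
  rw [← integrableOn_univ, ← Iic_union_Ioi (a := (0:ℝ))]
  refine IntegrableOn.union ?_ ?_
  · refine (integrableOn_exp_mul_Iic hε 0).congr_fun (fun y hy => ?_) measurableSet_Iic
    simp only [mem_Iic] at hy
    simp only [abs_of_nonpos hy]; congr 1; ring
  · refine (integrableOn_exp_mul_Ioi (neg_lt_zero.2 hε) 0).congr_fun (fun y hy => ?_) measurableSet_Ioi
    simp only [mem_Ioi] at hy
    simp only [abs_of_pos hy]

lemma Dens.Qc_le {ζ : ℝ → ℝ} {δ θ K : ℝ} (D : Dens ζ δ θ K) (t : ℝ) :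
    ENNReal.ofReal (Qc ζ t) ≤ ENNReal.ofReal (K * Real.exp (δ * t)) := by
  rw [Qc, ofReal_integral_eq_lintegral_ofReal D.int.integrableOn (ae_of_all _ D.nn),
    setLIntegral_congr Iio_ae_eq_Iic.symm]
  have := D.tail (-t)
  rw [show -δ * -t = δ * t by ring] at this
  refine le_trans (lintegral_mono_set ?_) this
  intro z hz
  simp only [mem_Iio] at hz
  simp only [mem_ofPred_eq]
  linarith [neg_le_abs z]

lemma Dens.Qc_int {ζ : ℝ → ℝ} {δ θ K : ℝ} (D : Dens ζ δ θ K) (hδ : 0 < δ) (k : ℝ) :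
    ∫⁻ x in Iio 0, ENNReal.ofReal (Qc ζ (x - k)) ≤ ENNReal.ofReal (K / δ * Real.exp (-δ * k)) := by
  have hK := D.K1
  calc ∫⁻ x in Iio 0, ENNReal.ofReal (Qc ζ (x - k))
      ≤ ∫⁻ x in Iio 0, ENNReal.ofReal (K * Real.exp (-δ * k) * Real.exp (δ * x)) := by
        refine lintegral_mono fun x => (D.Qc_le _).trans (le_of_eq ?_)
        rw [mul_assoc, ← Real.exp_add]; congr 3; ring
    _ = ENNReal.ofReal (K / δ * Real.exp (-δ * k)) := by
        rw [setLIntegral_congr Iio_ae_eq_Iic,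
          ← ofReal_integral_eq_lintegral_ofReal ((integrableOn_exp_mul_Iic hδ 0).const_mul _)
            (ae_of_all _ fun x => by positivity), integral_const_mul, integral_exp_mul_Iic hδ]
        congr 1; simp; ring

lemma Hk_meas {F Fo : ℝ → ℝ} (hF : Measurable F) (hFo : Measurable Fo) (k : ℝ) : Measurable (Hk F Fo k) := by
  unfold Hk
  refine Measurable.ite measurableSet_Ici ?_ ?_
  · exact measurable_const.sub (hFo.comp (measurable_const.sub measurable_id))
  · exact hF.comp (measurable_id.add_const k)

lemma half {ζ : ℝ → ℝ} {δ θ K : ℝ} (D : Dens ζ δ θ K) (hδ : 0 < δ) (hθ : 0 < θ)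
    {F Fo : ℝ → ℝ} {c co ρ E : ℝ} (hF : FH F c ρ E) (hFo : FH Fo co ρ E) (hρ : 0 < ρ)
    (hinv : ∀ x, Integrable (fun y => F y * sg y * ζ (x - hY y)) ∧ ∫ y, F y * sg y * ζ (x - hY y) = F x)
    {ε η : ℝ} (hε : 0 < ε) (hε1 : ε ≤ 1 / 4) (hη : 0 < η) (c1 : η + 2 * ε ≤ δ / 2) (c2 : η + ε ≤ ρ)
    (c3 : η + ε ≤ θ / 2) (c4 : η ≤ 1 / 2) {k : ℝ} (hk : 0 ≤ k)
    (hC : 1 + k ≤ Fo k + F k) {G : ℝ → ℝ} (hG : Measurable G) (hGb : ∀ x, |G x| ≤ 1)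
    (hGH : ∀ y, 1 - G y = Hk F Fo k y / (Fo k + F k)) :
    ∫⁻ x in Iio 0, ENNReal.ofReal |Tprob ζ k G x - G x| ≤
      ENNReal.ofReal ((K / δ + 12 * E * (2 * K * Real.exp δ + 2 * K * (2 + θ / δ) * ε⁻¹) * ε⁻¹ *
        ∫ y, Real.exp (-ε * |y|)) * Real.exp (-η * k)) := by
  have hK := D.K1
  have hE := hF.E1
  set C := Fo k + F k with hCdef
  have hC0 : 0 < C := by linarith
  set M := 12 * E * (2 * K * Real.exp δ + 2 * K * (2 + θ / δ) * ε⁻¹) * ε⁻¹ with hM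
  have hM0 : 0 ≤ M := by positivity
  set J := ∫ y, Real.exp (-ε * |y|) with hJ
  have hJ0 : 0 ≤ J := integral_nonneg fun y => (Real.exp_pos _).le
  set f : ℝ → ℝ → ℝ := fun x y => Hk F Fo k y * (sg (y + k) - sg (y - k)) * ζ (x - hkfun k y)
        - F (y + k) * sg (y + k) * ζ (x - gk k y) with hf
  have hmF := hF.mono.measurable
  have hmH := Hk_meas hmF hFo.mono.measurable k
  have hcs := sg_cont
  have hch := hk_cont k
  have hcg := gk_cont k
  have hcz := D.cont
  have mf : Measurable (Function.uncurry f) := by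
    have a1 : Measurable fun p : ℝ × ℝ => Hk F Fo k p.2 := hmH.comp measurable_snd
    have a2 : Measurable fun p : ℝ × ℝ => (sg (p.2 + k) - sg (p.2 - k)) * ζ (p.1 - hkfun k p.2) :=
      Continuous.measurable (by fun_prop)
    have a3 : Measurable fun p : ℝ × ℝ => F (p.2 + k) := hmF.comp (measurable_snd.add_const k)
    have a4 : Measurable fun p : ℝ × ℝ => sg (p.2 + k) * ζ (p.1 - gk k p.2) :=
      Continuous.measurable (by fun_prop)
    have := (a1.mul a2).sub (a3.mul a4)
    convert this using 1
    ext p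
    simp only [Function.uncurry, hf, Pi.sub_apply, Pi.mul_apply]; ring
  have hpt : ∀ x, x < 0 → ENNReal.ofReal |Tprob ζ k G x - G x| ≤
      ENNReal.ofReal (Qc ζ (x - k)) + ENNReal.ofReal C⁻¹ * ∫⁻ y, ENNReal.ofReal |f x y| := by
    intro x hx
    obtain ⟨i1, e1⟩ := one_sub_T D.cont D.nn D.int D.one hk hG hGb x
    obtain ⟨i2, e2⟩ := hinv (x + k)
    have i2' := i2.comp_add_right k
    rw [← integral_add_right_eq_self _ k] at e2
    have es : ∀ y, x + k - hY (y + k) = x - gk k y := fun y => by rw [hY_eq]; ring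
    simp only [es] at i2' e2
    simp only [hGH] at i1 e1
    have i1' : Integrable fun y => Hk F Fo k y * (sg (y + k) - sg (y - k)) * ζ (x - hkfun k y) := by
      have := i1.const_mul C
      refine this.congr (ae_of_all _ fun y => ?_)
      simp only; field_simp
    have e3 : ∫ y, Hk F Fo k y / C * (sg (y + k) - sg (y - k)) * ζ (x - hkfun k y)
        = C⁻¹ * ∫ y, Hk F Fo k y * (sg (y + k) - sg (y - k)) * ζ (x - hkfun k y) := by
      rw [← integral_const_mul]; congr 1; ext y; ring
    have e4 : ∫ y, f x y = (∫ y, Hk F Fo k y * (sg (y + k) - sg (y - k)) * ζ (x - hkfun k y)) - F (x + k) := by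
      rw [← e2, ← integral_sub i1' i2']
    have e5 : 1 - G x = C⁻¹ * F (x + k) := by
      rw [hGH, Hk, if_neg (not_le.2 hx)]; ring
    have e6 : Tprob ζ k G x - G x = - (Qc ζ (x - k) + C⁻¹ * ∫ y, f x y) := by
      rw [e4]; rw [e3] at e1; linear_combination e5 - e1
    have hQ0 : 0 ≤ Qc ζ (x - k) := integral_nonneg fun y => D.nn y
    rw [e6, abs_neg]
    calc ENNReal.ofReal |Qc ζ (x - k) + C⁻¹ * ∫ y, f x y|
        ≤ ENNReal.ofReal (Qc ζ (x - k) + C⁻¹ * |∫ y, f x y|) := by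
          apply ENNReal.ofReal_le_ofReal
          refine (abs_add_le _ _).trans (le_of_eq ?_)
          rw [abs_of_nonneg hQ0, abs_mul, abs_of_pos (inv_pos.2 hC0)]
      _ = ENNReal.ofReal (Qc ζ (x - k)) + ENNReal.ofReal C⁻¹ * ENNReal.ofReal |∫ y, f x y| := by
          rw [ENNReal.ofReal_add hQ0 (by positivity), ENNReal.ofReal_mul (by positivity)]
      _ ≤ _ := by
          gcongr
          have := enorm_integral_le_lintegral_enorm (μ := volume) (f x)
          simpa only [Real.enorm_eq_ofReal_abs] using this
  have hdbl : ∫⁻ x in Iio 0, ∫⁻ y, ENNReal.ofReal |f x y| ≤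
      ENNReal.ofReal (M * (1 + k) * Real.exp (-η * k) * J) := by
    rw [lintegral_lintegral_swap]
    · calc ∫⁻ y, ∫⁻ x in Iio 0, ENNReal.ofReal |f x y|
          ≤ ∫⁻ y, ENNReal.ofReal (M * (1 + k) * Real.exp (-η * k) * Real.exp (-ε * |y|)) := by
            refine lintegral_mono fun y => ?_
            refine (point D hδ hθ hF hFo hρ hε hε1 hη c1 c2 c3 c4 hk y).trans (le_of_eq ?_)
            congr 1; rw [hM]; ring
        _ = _ := by
            rw [← ofReal_integral_eq_lintegral_ofReal ((int_exp_abs hε).const_mul _)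
              (ae_of_all _ fun y => by positivity), integral_const_mul]
    · refine Measurable.aemeasurable ?_
      exact ENNReal.measurable_ofReal.comp (continuous_abs.measurable.comp mf)
  have hmQ : Measurable fun x => ENNReal.ofReal (Qc ζ (x - k)) := by
    have := Qc_cont D.cont D.int
    exact ENNReal.measurable_ofReal.comp (Continuous.measurable (by fun_prop))
  calc ∫⁻ x in Iio 0, ENNReal.ofReal |Tprob ζ k G x - G x|
      ≤ ∫⁻ x in Iio 0, (ENNReal.ofReal (Qc ζ (x - k)) + ENNReal.ofReal C⁻¹ * ∫⁻ y, ENNReal.ofReal |f x y|) :=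
        setLIntegral_mono' measurableSet_Iio fun x hx => hpt x hx
    _ = (∫⁻ x in Iio 0, ENNReal.ofReal (Qc ζ (x - k))) +
        ENNReal.ofReal C⁻¹ * ∫⁻ x in Iio 0, ∫⁻ y, ENNReal.ofReal |f x y| := by
        rw [lintegral_add_left hmQ, lintegral_const_mul' _ _ ENNReal.ofReal_ne_top]
    _ ≤ ENNReal.ofReal (K / δ * Real.exp (-δ * k)) +
        ENNReal.ofReal C⁻¹ * ENNReal.ofReal (M * (1 + k) * Real.exp (-η * k) * J) := by
        gcongr
        exact D.Qc_int hδ k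
    _ ≤ _ := by
        rw [← ENNReal.ofReal_mul (by positivity), ← ENNReal.ofReal_add (by positivity) (by positivity)]
        apply ENNReal.ofReal_le_ofReal
        have h1 : Real.exp (-δ * k) ≤ Real.exp (-η * k) := Real.exp_le_exp.2 (by nlinarith)
        have h2 : C⁻¹ * (1 + k) ≤ 1 := by rw [inv_mul_le_iff₀ hC0]; linarith
        calc K / δ * Real.exp (-δ * k) + C⁻¹ * (M * (1 + k) * Real.exp (-η * k) * J)
            = K / δ * Real.exp (-δ * k) + (C⁻¹ * (1 + k)) * (M * J * Real.exp (-η * k)) := by ring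
          _ ≤ K / δ * Real.exp (-η * k) + 1 * (M * J * Real.exp (-η * k)) := by gcongr
          _ = _ := by ring

lemma FH_of {ν : Measure ℝ} (hfin : ∀ x : ℝ, ν (Iic x) < ⊤) {c ρ Ca x₁ : ℝ} (hρ : 0 < ρ)
    (h : ∀ x ≥ x₁, |(ν (Set.Iic x)).toReal - (x + c)| ≤ Ca * Real.exp (-ρ * x)) :
    ∃ E₀ : ℝ, ∀ E ≥ E₀, FH (Fs ν) c ρ E := by
  have hmono := Fs_mono hfin
  set X := max x₁ 0 with hX
  have hX0 : 0 ≤ X := le_max_right _ _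
  set B := Fs ν X + X + |c| with hB
  have hB0 : 0 ≤ B := by have := Fs_nonneg ν X; positivity
  have h1 : ∀ x, 0 ≤ x → |Fs ν x - (x + c)| ≤ (|Ca| + B * Real.exp (ρ * X)) * Real.exp (-ρ * x) := by
    intro x hx
    have hpos := Real.exp_pos (-ρ * x)
    rcases le_total X x with hc | hc
    · have := h x ((le_max_left _ _).trans hc)
      have h2 : Ca * Real.exp (-ρ * x) ≤ |Ca| * Real.exp (-ρ * x) := by gcongr; exact le_abs_self _
      have h3 : 0 ≤ B * Real.exp (ρ * X) * Real.exp (-ρ * x) := by positivity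
      rw [add_mul]
      exact this.trans (by linarith)
    · have h2 : |Fs ν x - (x + c)| ≤ B := by
        have a1 := hmono hc
        have a2 := Fs_nonneg ν x
        have a3 := neg_abs_le c
        have a4 := le_abs_self c
        rw [abs_le]; constructor <;> linarith
      have h3 : B ≤ B * (Real.exp (ρ * X) * Real.exp (-ρ * x)) := by
        apply le_mul_of_one_le_right hB0
        rw [← Real.exp_add]
        apply Real.one_le_exp; nlinarith
      have h4 : 0 ≤ |Ca| * Real.exp (-ρ * x) := by positivity
      rw [add_mul, mul_assoc]; linarith
  set A := |Ca| + B * Real.exp (ρ * X) with hA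
  have hA0 : 0 ≤ A := by positivity
  refine ⟨A + |c| + 1, fun E hE => ⟨hmono, Fs_nonneg ν, by linarith [abs_nonneg c], fun x hx => ?_, fun x hx => ?_⟩⟩
  · refine (h1 x hx).trans ?_
    have : A ≤ E := by linarith [abs_nonneg c]
    gcongr
  · have h2 := (abs_le.1 (h1 x hx)).2
    have h3 : A * Real.exp (-ρ * x) ≤ A * 1 := by
      gcongr; rw [← Real.exp_zero]; exact Real.exp_le_exp.2 (by nlinarith)
    have h4 := le_abs_self c
    have h5 : (A + |c| + 1) * (1 + x) ≤ E * (1 + x) := by gcongr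
    nlinarith [abs_nonneg c]

lemma Dens.neg {ζ : ℝ → ℝ} {δ θ K : ℝ} (D : Dens ζ δ θ K) : Dens (fun x => ζ (-x)) δ θ K where
  cont := D.cont.comp continuous_neg
  nn x := D.nn _
  int := D.int.comp_neg
  one := by rw [integral_neg_eq_self]; exact D.one
  K1 := D.K1
  tail r := by
    refine le_trans (le_of_eq ?_) (D.tail r)
    have hm : MeasurableSet {y : ℝ | r < |y|} := measurableSet_lt measurable_const continuous_abs.measurable
    rw [← lintegral_indicator hm, ← lintegral_indicator hm,
      ← lintegral_neg_eq_self]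
    refine lintegral_congr fun x => ?_
    simp [indicator]
  hol x y := by
    refine (D.hol _ _).trans (le_of_eq ?_)
    rw [← abs_neg (x - y)]; congr 3; ring

lemma G_props {νl νr : Measure ℝ} (hfinl : ∀ x : ℝ, νl (Set.Iic x) < ⊤) (hfinr : ∀ x : ℝ, νr (Set.Iic x) < ⊤)
    {k : ℝ} (hC : 0 < Fs νr k + Fs νl k) :
    Measurable (GkDH νl νr k) ∧ (∀ x, |GkDH νl νr k x| ≤ 1) ∧
    (∀ y, 1 - GkDH νl νr k y = Hk (Fs νl) (Fs νr) k y / (Fs νr k + Fs νl k)) ∧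
    (∀ y, GkDH νr νl k y = 1 - GkDH νl νr k (-y)) := by
  have ml := Fs_mono hfinl
  have mr := Fs_mono hfinr
  have hH : ∀ y, 1 - GkDH νl νr k y = Hk (Fs νl) (Fs νr) k y / (Fs νr k + Fs νl k) := by
    intro y
    unfold GkDH Hk CkDH
    split_ifs
    · field_simp
    · ring
  refine ⟨?_, ?_, hH, ?_⟩
  · have : GkDH νl νr k = fun y => 1 - Hk (Fs νl) (Fs νr) k y / (Fs νr k + Fs νl k) := by
      ext y; rw [← hH]; ring
    rw [this]
    exact measurable_const.sub ((Hk_meas ml.measurable mr.measurable k).div_const _)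
  · intro x
    have h1 := Fs_nonneg νl k
    have h2 := Fs_nonneg νr k
    unfold GkDH CkDH
    split_ifs with hx
    · have h3 := mr (show k - x ≤ k by linarith)
      have h4 := Fs_nonneg νr (k - x)
      rw [abs_of_nonneg (by positivity), div_le_one hC]; linarith
    · have h3 := ml (show x + k ≤ k by linarith)
      have h4 := Fs_nonneg νl (x + k)
      have h5 : Fs νl (x + k) / (Fs νr k + Fs νl k) ≤ 1 := by rw [div_le_one hC]; linarith
      have h6 : 0 ≤ Fs νl (x + k) / (Fs νr k + Fs νl k) := by positivity
      rw [abs_le]; constructor <;> linarith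
  · intro y
    rw [hH]
    unfold GkDH Hk CkDH
    have hne := hC.ne'
    rcases lt_trichotomy y 0 with h | h | h
    · rw [if_neg (by linarith), if_pos (by linarith)]
      rw [show k - -y = y + k by ring, add_comm (Fs νl k)]
      field_simp
    · subst h
      simp [add_comm]
    · rw [if_pos h.le, if_neg (by linarith)]
      rw [show -y + k = k - y by ring, add_comm (Fs νl k)]

/-- Proposition: the one-step bound ‖T G_k - G_k‖₁ = O(e^{-η k}). -/
theorem stmt14
    (ζ : ℝ → ℝ) (hζmeas : Measurable ζ) (hζnn : ∀ x, 0 ≤ ζ x)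
    (hζprob : ∫ x, ζ x = 1)
    (hmean : ∫ x, x * ζ x = 0)
    (δ : ℝ) (hδ : 0 < δ) (Cδ : ℝ)
    (htail : ∀ x : ℝ, 0 ≤ x → ∫ y in {y : ℝ | x < |y|}, ζ y ≤ Cδ * Real.exp (-δ * x))
    (θ : ℝ) (hθ0 : 0 < θ) (hθ1 : θ ≤ 1) (Cθ : ℝ)
    (hHolder : ∀ x y : ℝ, |ζ x - ζ y| ≤ Cθ * |x - y| ^ θ)
    (νl νr : Measure ℝ)
    (hinvl : IsInvariantY ζ νl) (hinvr : IsInvariantY (fun x => ζ (-x)) νr)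
    (hfinl : ∀ x : ℝ, νl (Set.Iic x) < ⊤) (hfinr : ∀ x : ℝ, νr (Set.Iic x) < ⊤)
    (cl cr ρ : ℝ) (hρ0 : 0 < ρ) (hρ1 : ρ < 1) (Ca : ℝ) (x₁ : ℝ)
    (hasyml : ∀ x ≥ x₁, |(νl (Set.Iic x)).toReal - (x + cl)| ≤ Ca * Real.exp (-ρ * x))
    (hasymr : ∀ x ≥ x₁, |(νr (Set.Iic x)).toReal - (x + cr)| ≤ Ca * Real.exp (-ρ * x))
 :
    ∀ η : ℝ, 0 < η → η < min (δ / 2) (min (θ / 2) ρ) →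
      ∃ C > 0, ∃ k₀ : ℝ, ∀ k ≥ k₀,
        ∫⁻ x, ENNReal.ofReal |Tprob ζ k (GkDH νl νr k) x - GkDH νl νr k x|
          ≤ ENNReal.ofReal (C * Real.exp (-η * k)) := by
  intro η hη hmin
  have hηδ : η < δ / 2 := hmin.trans_le (min_le_left _ _)
  have hηθ : η < θ / 2 := hmin.trans_le ((min_le_right _ _).trans (min_le_left _ _))
  have hηρ : η < ρ := hmin.trans_le ((min_le_right _ _).trans (min_le_right _ _))
  have hint : Integrable ζ := by
    by_contra h
    rw [integral_undef h] at hζprob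
    norm_num at hζprob
  have hcont : Continuous ζ := by
    rw [continuous_iff_continuousAt]
    intro x
    rw [ContinuousAt, tendsto_iff_dist_tendsto_zero]
    have hc : Continuous fun y : ℝ => Cθ * |y - x| ^ θ := by
      refine continuous_const.mul (Continuous.rpow_const (by fun_prop) fun _ => Or.inr hθ0.le)
    have ht := hc.tendsto x
    simp only [sub_self, abs_zero, Real.zero_rpow hθ0.ne', mul_zero] at ht
    exact squeeze_zero (fun _ => dist_nonneg) (fun y => hHolder y x) ht
  have D : Dens ζ δ θ (|Cδ| + |Cθ| + 1) := by
    refine ⟨hcont, hζnn, hint, hζprob, by linarith [abs_nonneg Cδ, abs_nonneg Cθ], fun r => ?_, fun x y => ?_⟩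
    · rcases le_or_gt 0 r with hr | hr
      · rw [← ofReal_integral_eq_lintegral_ofReal hint.integrableOn (ae_of_all _ hζnn)]
        apply ENNReal.ofReal_le_ofReal
        refine (htail r hr).trans ?_
        gcongr
        linarith [le_abs_self Cδ, abs_nonneg Cθ]
      · refine (setLIntegral_le_lintegral _ _).trans ?_
        rw [← ofReal_integral_eq_lintegral_ofReal hint (ae_of_all _ hζnn), hζprob]
        apply ENNReal.ofReal_le_ofReal
        have h1 : 1 ≤ Real.exp (-δ * r) := Real.one_le_exp (by nlinarith)
        have h2 : 1 ≤ |Cδ| + |Cθ| + 1 := by linarith [abs_nonneg Cδ, abs_nonneg Cθ]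
        nlinarith
    · refine (hHolder x y).trans ?_
      gcongr
      linarith [le_abs_self Cθ, abs_nonneg Cδ]
  obtain ⟨El, hEl⟩ := FH_of hfinl hρ0 hasyml
  obtain ⟨Er, hEr⟩ := FH_of hfinr hρ0 hasymr
  have hFl := hEl (max El Er) (le_max_left _ _)
  have hFr := hEr (max El Er) (le_max_right _ _)
  set E := max El Er with hE
  have hil := inv_F hcont hζnn hint hfinl hinvl
  have hir := inv_F D.neg.cont D.neg.nn D.neg.int hfinr hinvr
  obtain ⟨ε, hε, hε1, c1, c2, c3⟩ : ∃ ε : ℝ, 0 < ε ∧ ε ≤ 1 / 4 ∧ η + 2 * ε ≤ δ / 2 ∧ η + ε ≤ ρ ∧ η + ε ≤ θ / 2 := by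
    refine ⟨min (1 / 4) (min ((δ / 2 - η) / 2) (min (ρ - η) (θ / 2 - η))), ?_, min_le_left _ _, ?_, ?_, ?_⟩
    · refine lt_min (by norm_num) (lt_min (by linarith) (lt_min (by linarith) (by linarith)))
    · have := (min_le_right (1 / 4) (min ((δ / 2 - η) / 2) (min (ρ - η) (θ / 2 - η)))).trans (min_le_left _ _)
      linarith
    · have := (min_le_right (1 / 4) (min ((δ / 2 - η) / 2) (min (ρ - η) (θ / 2 - η)))).trans
        ((min_le_right _ _).trans (min_le_left _ _))
      linarith
    · have := (min_le_right (1 / 4) (min ((δ / 2 - η) / 2) (min (ρ - η) (θ / 2 - η)))).trans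
        ((min_le_right _ _).trans (min_le_right _ _))
      linarith
  have c4 : η ≤ 1 / 2 := by linarith
  set K := |Cδ| + |Cθ| + 1 with hK
  have hK1 := D.K1
  have hE1 := hFl.E1
  set B := K / δ + 12 * E * (2 * K * Real.exp δ + 2 * K * (2 + θ / δ) * ε⁻¹) * ε⁻¹ *
        ∫ y, Real.exp (-ε * |y|) with hB
  have hJ0 : 0 ≤ ∫ y, Real.exp (-ε * |y|) := integral_nonneg fun y => (Real.exp_pos _).le
  have hB0 : 0 < B := by positivity
  refine ⟨2 * B, by positivity, max 0 (1 - cl - cr + 2 * E), fun k hk => ?_⟩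
  have hk0 : 0 ≤ k := (le_max_left _ _).trans hk
  have hk1 : 1 - cl - cr + 2 * E ≤ k := (le_max_right _ _).trans hk
  have hC : 1 + k ≤ Fs νr k + Fs νl k := by
    have h1 := (abs_le.1 (hFl.asym k hk0)).1
    have h2 := (abs_le.1 (hFr.asym k hk0)).1
    have h3 : E * Real.exp (-ρ * k) ≤ E * 1 := by
      gcongr; rw [← Real.exp_zero]; exact Real.exp_le_exp.2 (by nlinarith)
    linarith
  have hC' : 1 + k ≤ Fs νl k + Fs νr k := by linarith
  obtain ⟨g1, g2, g3, g4⟩ := G_props hfinl hfinr (k := k) (by linarith)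
  obtain ⟨g1', g2', g3', -⟩ := G_props hfinr hfinl (k := k) (by linarith)
  have hL := half D hδ hθ0 hFl hFr hρ0 hil hε hε1 hη c1 c2 c3 c4 hk0 hC g1 g2 g3
  have hR := half D.neg hδ hθ0 hFr hFl hρ0 hir hε hε1 hη c1 c2 c3 c4 hk0 hC' g1' g2' g3'
  rw [← hB] at hL hR
  have hsplit : ∫⁻ x, ENNReal.ofReal |Tprob ζ k (GkDH νl νr k) x - GkDH νl νr k x|
      = (∫⁻ x in Iio 0, ENNReal.ofReal |Tprob ζ k (GkDH νl νr k) x - GkDH νl νr k x|)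
        + ∫⁻ x in Ioi 0, ENNReal.ofReal |Tprob ζ k (GkDH νl νr k) x - GkDH νl νr k x| := by
    rw [← lintegral_add_compl _ (measurableSet_Iio (a := (0:ℝ))), compl_Iio,
      setLIntegral_congr Ioi_ae_eq_Ici.symm]
  have hrefl : ∫⁻ x in Ioi 0, ENNReal.ofReal |Tprob ζ k (GkDH νl νr k) x - GkDH νl νr k x|
      = ∫⁻ x in Iio 0, ENNReal.ofReal |Tprob (fun x => ζ (-x)) k (GkDH νr νl k) x - GkDH νr νl k x| := by
    rw [← lintegral_indicator measurableSet_Ioi, ← lintegral_indicator measurableSet_Iio,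
      ← lintegral_neg_eq_self]
    refine lintegral_congr fun x => ?_
    have e1 : GkDH νr νl k = fun y => 1 - GkDH νl νr k (-y) := funext g4
    by_cases hx : x < 0
    · rw [indicator_of_mem (by simpa using hx), indicator_of_mem (by simpa using hx), e1,
        T_reflect hcont hζnn hint hζprob hk0 g1 g2 x, ← abs_neg]
      congr 2; ring
    · rw [indicator_of_notMem (by simpa using hx), indicator_of_notMem (by simpa using hx)]
  rw [hsplit, hrefl]
  refine (add_le_add hL hR).trans (le_of_eq ?_)
  rw [← ENNReal.ofReal_add (by positivity) (by positivity)]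
  congr 1; ring
end

section
/- Let f : ℝ → ℝ satisfy |f(x) − f(y)| ≤ |x − y|^θ for all x ≠ y (for some θ > 0) and ∫_ℝ |f(x)| e^{c|x|} dx < ∞ for some c > 0. Then f(x) = O(e^{−b|x|}) as |x| → ∞, with b = cθ/(1 + θ). -/
open MeasureTheory Real

/-- Hölder continuity plus exponential integrability imply pointwise exponential decay. -/
theorem stmt18 (f : ℝ → ℝ) (θ : ℝ) (hθ : 0 < θ)
    (hHolder : ∀ x y : ℝ, x ≠ y → |f x - f y| ≤ |x - y| ^ θ)
    (c : ℝ) (hc : 0 < c)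
    (hint : Integrable (fun x => |f x| * Real.exp (c * |x|))) :
    ∃ C > 0, ∃ R : ℝ, ∀ x : ℝ, R ≤ |x| →
      |f x| ≤ C * Real.exp (-(c * θ / (1 + θ)) * |x|) := by
  have hM : 0 ≤ ∫ y, |f y| * Real.exp (c * |y|) :=
    integral_nonneg (fun y => by positivity)
  refine ⟨1 + (∫ y, |f y| * Real.exp (c * |y|)) * Real.exp c, by positivity, 0, ?_⟩
  intro x _
  set M := ∫ y, |f y| * Real.exp (c * |y|) with hMdef
  set h := Real.exp (-(c / (1 + θ)) * |x|) with hh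
  set E := Real.exp (-(c * θ / (1 + θ)) * |x|) with hE
  have hpos : 0 < h := Real.exp_pos _
  have Epos : 0 < E := Real.exp_pos _
  have h1 : h ≤ 1 := by
    rw [hh, Real.exp_le_one_iff]
    have : 0 ≤ c / (1 + θ) * |x| := by positivity
    linarith
  have hpow : h ^ θ = E := by
    rw [hh, hE, ← Real.exp_mul]
    congr 1
    ring
  have hprod : h * Real.exp (c * (|x| - 1)) * Real.exp c * E = 1 := by
    rw [hh, hE, ← Real.exp_add, ← Real.exp_add, ← Real.exp_add, Real.exp_eq_one_iff]
    field_simp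
    ring
  by_cases hcase : |f x| ≤ E
  · have : 0 ≤ M * Real.exp c * E := by positivity
    linarith
  push Not at hcase
  have key : ∀ y ∈ Set.Icc x (x + h),
      (|f x| - E) * Real.exp (c * (|x| - 1)) ≤ |f y| * Real.exp (c * |y|) := by
    intro y hy
    have hxy : |x - y| ≤ h := by
      rw [abs_le]; constructor <;> linarith [hy.1, hy.2]
    have hf : |f x| - E ≤ |f y| := by
      by_cases hne : x = y
      · subst hne; linarith
      · have h2 := hHolder x y hne
        have h3 : |x - y| ^ θ ≤ h ^ θ := Real.rpow_le_rpow (abs_nonneg _) hxy hθ.le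
        have h4 := abs_sub_abs_le_abs_sub (f x) (f y)
        linarith
    have hy2 : |x| - 1 ≤ |y| := by
      have := abs_sub_abs_le_abs_sub x y
      linarith
    gcongr
  have hI : ∫ y in Set.Icc x (x + h), (|f x| - E) * Real.exp (c * (|x| - 1))
      ≤ ∫ y in Set.Icc x (x + h), |f y| * Real.exp (c * |y|) :=
    setIntegral_mono_on (integrableOn_const (by simp)) hint.integrableOn
      measurableSet_Icc key
  have hJ : ∫ y in Set.Icc x (x + h), |f y| * Real.exp (c * |y|) ≤ M :=
    setIntegral_le_integral hint (Filter.Eventually.of_forall fun y => by positivity)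
  rw [setIntegral_const, Real.volume_real_Icc_of_le (by linarith), smul_eq_mul] at hI
  have hK := hI.trans hJ
  have hL := mul_le_mul_of_nonneg_right hK (by positivity : 0 ≤ Real.exp c * E)
  have : (x + h - x) * ((|f x| - E) * Real.exp (c * (|x| - 1))) * (Real.exp c * E)
      = |f x| - E := by
    calc _ = (|f x| - E) * (h * Real.exp (c * (|x| - 1)) * Real.exp c * E) := by ring
      _ = _ := by rw [hprod, mul_one]
  rw [this] at hL
  linarith
end
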